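/- Let n ≥ 1 be a natural number and let a ∈ L_T satisfy λ_{2n−1} ≺ a and ∫_0^T |a(x)| dx ≤ γ_{1,n}, where γ_{1,n} = T·λ_{2n−1} + (8πn(n+1)/T)·cot(nπ/(2(n+1))). Then the periodic problem u'' + a(x)u = 0 on (0,T), u(0) = u(T), u'(0) = u'(T), has only the trivial solution u ≡ 0. -/

import Mathlib

open MeasureTheory Set Real

/-- `u` is a solution of `u'' + a·u = 0` on `[c,d]`, with derivative function `v`. -/
def IsSolOn (a u v : ℝ → ℝ) (c d : ℝ) : Prop :=
  (∀ x ∈ Set.Icc c d, HasDerivWithinAt u (v x) (Set.Icc c d) x) ∧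
  (∀ x ∈ Set.Icc c d, v x = v c - ∫ t in c..x, a t * u t)

/-- Membership in `L_T`: measurable, `T`-periodic and integrable on `[0,T]`. -/
def MemLT (T : ℝ) (a : ℝ → ℝ) : Prop :=
  Measurable a ∧ (∀ x, a (x + T) = a x) ∧ IntegrableOn a (Set.Icc 0 T)

/-- `c ≺ d` : `c ≤ d` a.e. on `[0,T]` and `c < d` on a set of positive measure. -/
def Prec (T : ℝ) (c d : ℝ → ℝ) : Prop :=
  (∀ᵐ x ∂(volume.restrict (Set.Icc 0 T)), c x ≤ d x) ∧
  0 < volume {x ∈ Set.Icc 0 T | c x < d x}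

/-- `(u,v)` solves the periodic problem `u'' + a u = 0`, `u(0)=u(T)`, `u'(0)=u'(T)`. -/
def PeriodicSol (T : ℝ) (a u v : ℝ → ℝ) : Prop :=
  IsSolOn a u v 0 T ∧ u 0 = u T ∧ v 0 = v T

/-- `(u,v)` solves the antiperiodic problem `u'' + a u = 0`, `u(0)+u(T)=0`, `u'(0)+u'(T)=0`. -/
def AntiperiodicSol (T : ℝ) (a u v : ℝ → ℝ) : Prop :=
  IsSolOn a u v 0 T ∧ u 0 + u T = 0 ∧ v 0 + v T = 0

/-- The `(2n-1)`-st periodic eigenvalue `λ_{2n-1} = 4 n² π² / T²`. -/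
noncomputable def lam (T : ℝ) (n : ℕ) : ℝ := 4 * (n : ℝ) ^ 2 * Real.pi ^ 2 / T ^ 2

/-- The `(2n-1)`-st antiperiodic eigenvalue `λ̃_{2n-1} = (2n-1)² π² / T²`. -/
noncomputable def lamT (T : ℝ) (n : ℕ) : ℝ := (2 * (n : ℝ) - 1) ^ 2 * Real.pi ^ 2 / T ^ 2

/-- The set `Λ_n`. -/
def LambdaN (T : ℝ) (n : ℕ) : Set (ℝ → ℝ) :=
  {a | MemLT T a ∧ Prec T (fun _ => lam T n) a ∧
    ∃ u v : ℝ → ℝ, PeriodicSol T a u v ∧ ∃ x ∈ Set.Icc 0 T, u x ≠ 0}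

/-- The set `Λ̃_n`. -/
def LambdaTildeN (T : ℝ) (n : ℕ) : Set (ℝ → ℝ) :=
  {a | MemLT T a ∧ Prec T (fun _ => lamT T n) a ∧
    ∃ u v : ℝ → ℝ, AntiperiodicSol T a u v ∧ ∃ x ∈ Set.Icc 0 T, u x ≠ 0}

/-- The constant `β_{1,n}` of the periodic `L¹` Lyapunov inequality. -/
noncomputable def beta1 (T : ℝ) (n : ℕ) : ℝ :=
  8 * Real.pi * (n : ℝ) * ((n : ℝ) + 1) / T * Real.cot ((n : ℝ) * Real.pi / (2 * ((n : ℝ) + 1)))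

/-- The constant `β̃_{1,n}` of the antiperiodic `L¹` Lyapunov inequality. -/
noncomputable def betaT1 (T : ℝ) (n : ℕ) : ℝ :=
  2 * Real.pi * (2 * (n : ℝ) - 1) * (2 * (n : ℝ) + 1) / T *
    Real.cot ((2 * (n : ℝ) - 1) * Real.pi / (2 * (2 * (n : ℝ) + 1)))

/-!
The phase-plane point `z = u' + iωu` of a solution of `u'' + au = 0` satisfies the linear equation
`z' = κz` with `κ = iω - (a - ω²)u/z`, so `z = z(0)·exp ∫κ`: a nontrivial solution never meets `0`,
and a continuous argument `θ` of `z` satisfies `θ' = ω + ((a - ω²)/ω) sin² θ`.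

Take `ω = kπ/T` with `k = 2n`, and write periodicity as `u(T) = (-1)^k u(0)`,
`u'(T) = (-1)^k u'(0)`; the argument works for every `k ≥ 1`. Then `θ` makes `m` half turns on
`[0,T]` with `m ≡ k` modulo `2`, and `ω² ≺ a` forces `m > k`, so `m ≥ k + 2`.
To bound the integral of `a` below, integrate `W(θ)θ'` with
`W(y) = 1 / max (sin² y) (sin² α)`. On the one hand this is
`m ∫_0^π W ≥ (k + 2) ∫_0^π W = 2(k + 2)(α / sin² α + cot α)`. On the other hand, `W(θ) sin² θ ≤ 1`
and `W ≤ 1 / sin² α` bound it by `∫(a - ω²)/ω + ωT / sin² α`, strictly. The terms in `1 / sin² α`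
cancel for `α = kπ/(2(k+2))`.
-/

section AbsolutelyContinuous

variable {a b : ℝ}

theorem absolutelyContinuousOnInterval_of_dist_le {X Y : Type*} [PseudoMetricSpace X]
    [PseudoMetricSpace Y] {f : ℝ → X} {g : ℝ → Y} {K : ℝ}
    (hf : AbsolutelyContinuousOnInterval f a b)
    (h : ∀ x ∈ uIcc a b, ∀ y ∈ uIcc a b, dist (g x) (g y) ≤ K * dist (f x) (f y)) :
    AbsolutelyContinuousOnInterval g a b := by
  unfold AbsolutelyContinuousOnInterval at hf ⊢
  refine squeeze_zero' (.of_forall fun _ ↦ Finset.sum_nonneg fun _ _ ↦ dist_nonneg) ?_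
    (by simpa only [mul_zero] using hf.const_mul K)
  rw [Filter.eventually_inf_principal]
  refine .of_forall fun E hE ↦ ?_
  rw [Finset.mul_sum]
  exact Finset.sum_le_sum fun i hi ↦ h _ (hE.1 i hi).1 _ (hE.1 i hi).2

theorem absolutelyContinuousOnInterval_comp_of_contDiff {E F : Type*} [NormedAddCommGroup E]
    [NormedSpace ℝ E] [ProperSpace E] [NormedAddCommGroup F] [NormedSpace ℝ F]
    {f : ℝ → E} {φ : E → F} (hf : AbsolutelyContinuousOnInterval f a b) (hφ : ContDiff ℝ 1 φ) :
    AbsolutelyContinuousOnInterval (fun x ↦ φ (f x)) a b := by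
  obtain ⟨C, hC⟩ := hf.exists_bound
  obtain ⟨K, hK⟩ := (hφ.contDiffOn (s := Metric.closedBall 0 C)).exists_lipschitzOnWith
    one_ne_zero (convex_closedBall _ _) (isCompact_closedBall _ _)
  have hmem : ∀ x ∈ uIcc a b, f x ∈ Metric.closedBall 0 C := fun x hx ↦
    mem_closedBall_zero_iff.2 (hC x hx)
  exact absolutelyContinuousOnInterval_of_dist_le hf fun x hx y hy ↦
    hK.dist_le_mul _ (hmem x hx) _ (hmem y hy)

theorem absolutelyContinuousOnInterval_add_integral {E : Type*} [NormedAddCommGroup E]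
    [NormedSpace ℝ E] {p : ℝ → E} (hp : IntervalIntegrable p volume a b) (z : E) :
    AbsolutelyContinuousOnInterval (fun x ↦ z + ∫ t in a..x, p t) a b := by
  refine absolutelyContinuousOnInterval_of_dist_le (K := 1)
    (hp.norm.absolutelyContinuousOnInterval_intervalIntegral left_mem_uIcc) fun x hx y hy ↦ ?_
  have hint : ∀ {w}, w ∈ uIcc a b → IntervalIntegrable p volume a w := fun hw ↦
    hp.mono_set (uIcc_subset_uIcc left_mem_uIcc hw)
  rw [dist_add_left, dist_eq_norm, intervalIntegral.integral_interval_sub_left (hint hx) (hint hy),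
    one_mul, Real.dist_eq,
    intervalIntegral.integral_interval_sub_left (hint hx).norm (hint hy).norm]
  exact intervalIntegral.norm_integral_le_abs_integral_norm

theorem ae_hasDerivAt_add_integral {E : Type*} [NormedAddCommGroup E] [NormedSpace ℝ E]
    [CompleteSpace E] {p : ℝ → E} (hp : IntervalIntegrable p volume a b) (z : E) :
    ∀ᵐ x, x ∈ uIcc a b → HasDerivAt (fun x ↦ z + ∫ t in a..x, p t) (p x) x := by
  filter_upwards [hp.ae_hasDerivAt_integral] with x hx hxab
  exact (hx hxab a left_mem_uIcc).const_add z

theorem intervalIntegrable_ofReal {f : ℝ → ℝ} (hf : IntervalIntegrable f volume a b) :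
    IntervalIntegrable (fun x ↦ (f x : ℂ)) volume a b :=
  ⟨hf.1.ofReal, hf.2.ofReal⟩

theorem integral_comp_mul_of_eq_add_integral {θ p W : ℝ → ℝ}
    (hp : IntervalIntegrable p volume a b)
    (hθ : ∀ x ∈ uIcc a b, θ x = θ a + ∫ t in a..x, p t) (hW : Continuous W) :
    ∫ t in a..b, W (θ t) * p t = ∫ y in θ a..θ b, W y := by
  set V : ℝ → ℝ := fun y ↦ ∫ t in θ a..y, W t
  have hV : ∀ y, HasDerivAt V (W y) y := fun y ↦ (hW.integral_hasStrictDerivAt _ y).hasDerivAt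
  have hVC : ContDiff ℝ 1 V := by
    rw [contDiff_one_iff_deriv, funext fun y ↦ (hV y).deriv]
    exact ⟨fun y ↦ (hV y).differentiableAt, hW⟩
  have hac := absolutelyContinuousOnInterval_comp_of_contDiff
    (absolutelyContinuousOnInterval_add_integral hp (θ a)) hVC
  calc ∫ t in a..b, W (θ t) * p t
      = ∫ t in a..b, deriv (fun x ↦ V (θ a + ∫ t in a..x, p t)) t := by
        refine intervalIntegral.integral_congr_ae ?_
        filter_upwards [ae_hasDerivAt_add_integral hp (θ a)] with t ht hmem
        have htab := uIoc_subset_uIcc hmem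
        rw [hθ t htab]
        exact ((hV _).comp t (ht htab)).deriv.symm
    _ = V (θ b) - V (θ a) := by
        rw [hac.integral_deriv_eq_sub, ← hθ a left_mem_uIcc, ← hθ b right_mem_uIcc]
    _ = ∫ y in θ a..θ b, W y := by simp only [V, intervalIntegral.integral_same, sub_zero]

theorem eq_mul_exp_integral_of_eq_add_integral {κ z : ℝ → ℂ}
    (hκ : IntervalIntegrable κ volume a b) (hz : ContinuousOn z (uIcc a b))
    (h : ∀ x ∈ uIcc a b, z x = z a + ∫ t in a..x, κ t * z t) :
    ∀ x ∈ uIcc a b, z x = z a * Complex.exp (∫ t in a..x, κ t) := by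
  have hκz : IntervalIntegrable (fun t ↦ κ t * z t) volume a b := hκ.mul_continuousOn hz
  set ζ : ℝ → ℂ := fun x ↦ z a + ∫ t in a..x, κ t * z t
  set ε : ℝ → ℂ := fun x ↦ Complex.exp (0 + ∫ t in a..x, -κ t)
  have hε : AbsolutelyContinuousOnInterval ε a b :=
    absolutelyContinuousOnInterval_comp_of_contDiff
      (absolutelyContinuousOnInterval_add_integral hκ.neg 0) (Complex.contDiff_exp)
  have hderiv : ∀ᵐ x, x ∈ uIcc a b → HasDerivAt (ζ • ε) 0 x := by
    filter_upwards [ae_hasDerivAt_add_integral hκz (z a), ae_hasDerivAt_add_integral hκ.neg 0]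
      with x hζx hεx hx
    refine ((hζx hx).smul (hεx hx).cexp).congr_deriv ?_
    simp only [smul_eq_mul, ← h x hx, Pi.neg_apply]
    ring
  obtain ⟨C, hC⟩ := ((absolutelyContinuousOnInterval_add_integral hκz (z a)).smul
    hε).const_of_ae_hasDerivAt_zero hderiv
  have hCa : C = z a := by
    rw [← hC a left_mem_uIcc]
    simp [ε]
  intro x hx
  have hprod : z x * Complex.exp (-∫ t in a..x, κ t) = z a := by
    rw [← hCa, ← hC x hx, h x hx]
    simp [ε]
  rw [← hprod, mul_assoc, ← Complex.exp_add, neg_add_cancel, Complex.exp_zero, mul_one]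

end AbsolutelyContinuous

section PhasePlane

variable {ω c d : ℝ} {a u v : ℝ → ℝ}

/-- The phase-plane point `u' + iωu` of a function `u` with derivative `v`. Taking `u'` as the real
part makes the argument of this point increase along solutions. -/
noncomputable def phasePoint (ω : ℝ) (u v : ℝ → ℝ) (x : ℝ) : ℂ := v x + ω * u x * Complex.I

/-- The logarithmic derivative `κ = iω - (a - ω²)u/z` of the phase-plane point `z` of a solution
of `u'' + au = 0`. Where `z = 0` also `u = 0`, so the value of the quotient there is immaterial. -/
noncomputable def phaseRate (ω : ℝ) (a u v : ℝ → ℝ) (x : ℝ) : ℂ :=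
  ω * Complex.I - (a x - ω ^ 2 : ℝ) * (u x / phasePoint ω u v x)

/-- `θ` is a Prüfer angle on `[c,d]` for `u'' + au = 0` at frequency `ω`: in integrated form,
`θ' = ω cos² θ + (a/ω) sin² θ`. -/
structure IsPruferAngle (ω : ℝ) (a θ : ℝ → ℝ) (c d : ℝ) : Prop where
  continuousOn : ContinuousOn θ (Icc c d)
  eq_add_integral : ∀ x ∈ Icc c d, θ x = θ c + ∫ t in c..x, (ω + (a t - ω ^ 2) / ω * sin (θ t) ^ 2)

theorem phasePoint_im (x : ℝ) : (phasePoint ω u v x).im = ω * u x := by simp [phasePoint]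

theorem eq_zero_of_phasePoint_eq_zero (hω : ω ≠ 0) {x : ℝ} (h : phasePoint ω u v x = 0) :
    u x = 0 := by
  have him := phasePoint_im (ω := ω) (u := u) (v := v) x
  rw [h, Complex.zero_im] at him
  exact (mul_eq_zero.1 him.symm).resolve_left hω

theorem phaseRate_mul_phasePoint (hω : ω ≠ 0) (x : ℝ) :
    phaseRate ω a u v x * phasePoint ω u v x = (-(a x * u x) : ℝ) + (ω * v x : ℝ) * Complex.I := by
  have hquot : (u x : ℂ) / phasePoint ω u v x * phasePoint ω u v x = u x :=
    div_mul_cancel_of_imp fun h ↦ by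
      exact_mod_cast eq_zero_of_phasePoint_eq_zero hω h
  rw [phaseRate, sub_mul, mul_assoc ((a x - ω ^ 2 : ℝ) : ℂ), hquot, phasePoint]
  push_cast
  linear_combination (ω : ℂ) ^ 2 * u x * Complex.I_mul_I

theorem norm_div_phasePoint_le (hω : 0 < ω) (x : ℝ) : ‖(u x : ℂ) / phasePoint ω u v x‖ ≤ 1 / ω := by
  have him : ω * ‖u x‖ ≤ ‖phasePoint ω u v x‖ := by
    simpa [phasePoint_im, abs_mul, abs_of_pos hω] using
      Complex.abs_im_le_norm (phasePoint ω u v x)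
  rw [norm_div, Complex.norm_real]
  refine div_le_of_le_mul₀ (norm_nonneg _) (by positivity) ?_
  rwa [one_div, ← div_eq_inv_mul, le_div_iff₀' hω]

theorem continuousOn_phasePoint {s : Set ℝ} (hu : ContinuousOn u s) (hv : ContinuousOn v s) :
    ContinuousOn (phasePoint ω u v) s := by
  unfold phasePoint
  fun_prop

theorem intervalIntegrable_phaseRate (hω : 0 < ω) (ha : IntervalIntegrable a volume c d)
    (hu : ContinuousOn u (uIcc c d)) (hv : ContinuousOn v (uIcc c d)) :
    IntervalIntegrable (phaseRate ω a u v) volume c d := by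
  have hmeas : ∀ {f : ℝ → ℂ}, ContinuousOn f (uIcc c d) →
      AEMeasurable f (volume.restrict (uIoc c d)) := fun hf ↦
    (hf.mono uIoc_subset_uIcc).aemeasurable measurableSet_uIoc
  have hexcess : IntervalIntegrable (fun x ↦ ((a x - ω ^ 2 : ℝ) : ℂ)) volume c d :=
    intervalIntegrable_ofReal (ha.sub intervalIntegrable_const)
  refine (intervalIntegrable_const (c := (ω * Complex.I : ℂ))).sub ?_
  rw [intervalIntegrable_iff] at hexcess ⊢
  refine Integrable.mul_bdd (c := 1 / ω) hexcess ?_ (.of_forall fun x ↦ norm_div_phasePoint_le hω x)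
  exact ((hmeas (Complex.continuous_ofReal.comp_continuousOn hu)).div
    (hmeas (continuousOn_phasePoint hu hv))).aestronglyMeasurable

namespace IsSolOn

theorem continuousOn (h : IsSolOn a u v c d) : ContinuousOn u (Icc c d) := fun x hx ↦
  (h.1 x hx).continuousWithinAt

theorem intervalIntegrable_mul (h : IsSolOn a u v c d) (hcd : c ≤ d)
    (ha : IntervalIntegrable a volume c d) : IntervalIntegrable (fun t ↦ a t * u t) volume c d :=
  ha.mul_continuousOn (uIcc_of_le hcd ▸ h.continuousOn)

theorem continuousOn_deriv (h : IsSolOn a u v c d) (hcd : c ≤ d)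
    (ha : IntervalIntegrable a volume c d) : ContinuousOn v (Icc c d) := by
  refine (continuousOn_const.sub ?_).congr h.2
  rw [← uIcc_of_le hcd]
  exact intervalIntegral.continuousOn_primitive_interval
    ((intervalIntegrable_iff').1 (h.intervalIntegrable_mul hcd ha))

theorem eq_add_integral (h : IsSolOn a u v c d) (ha : IntervalIntegrable a volume c d) {x : ℝ}
    (hx : x ∈ Icc c d) : u x = u c + ∫ t in c..x, v t := by
  have hcd : c ≤ d := hx.1.trans hx.2
  have hsub : Icc c x ⊆ Icc c d := Icc_subset_Icc_right hx.2
  rw [intervalIntegral.integral_eq_sub_of_hasDeriv_right (f := u)]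
  · ring
  · rw [uIcc_of_le hx.1]
    exact h.continuousOn.mono hsub
  · intro t ht
    rw [min_eq_left hx.1, max_eq_right hx.1] at ht
    exact ((h.1 t (hsub (Ioo_subset_Icc_self ht))).hasDerivAt
      (Icc_mem_nhds ht.1 (ht.2.trans_le hx.2))).hasDerivWithinAt
  · refine ContinuousOn.intervalIntegrable ?_
    rw [uIcc_of_le hx.1]
    exact (h.continuousOn_deriv hcd ha).mono hsub

theorem phasePoint_eq_add_integral (h : IsSolOn a u v c d) (hω : ω ≠ 0)
    (ha : IntervalIntegrable a volume c d) {x : ℝ} (hx : x ∈ Icc c d) :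
    phasePoint ω u v x =
      phasePoint ω u v c + ∫ t in c..x, phaseRate ω a u v t * phasePoint ω u v t := by
  have hcd : c ≤ d := hx.1.trans hx.2
  have hsub : uIcc c x ⊆ uIcc c d := uIcc_subset_uIcc left_mem_uIcc (uIcc_of_le hcd ▸ hx)
  have hau : IntervalIntegrable (fun t ↦ (-(a t * u t) : ℝ)) volume c x :=
    ((h.intervalIntegrable_mul hcd ha).mono_set hsub).neg
  have hv : IntervalIntegrable (fun t ↦ (ω * v t : ℝ)) volume c x :=
    (((uIcc_of_le hcd ▸ h.continuousOn_deriv hcd ha).mono hsub).intervalIntegrable).const_mul ω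
  simp only [phaseRate_mul_phasePoint hω]
  rw [intervalIntegral.integral_add (intervalIntegrable_ofReal hau)
      ((intervalIntegrable_ofReal hv).mul_const _),
    intervalIntegral.integral_mul_const, intervalIntegral.integral_ofReal,
    intervalIntegral.integral_ofReal, intervalIntegral.integral_neg,
    intervalIntegral.integral_const_mul, phasePoint, phasePoint, h.2 x hx, h.eq_add_integral ha hx]
  push_cast
  ring

theorem phasePoint_eq_mul_exp (h : IsSolOn a u v c d) (hω : 0 < ω)
    (ha : IntervalIntegrable a volume c d) {x : ℝ} (hx : x ∈ Icc c d) :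
    phasePoint ω u v x = phasePoint ω u v c * Complex.exp (∫ t in c..x, phaseRate ω a u v t) := by
  have hcd : c ≤ d := hx.1.trans hx.2
  have hv := h.continuousOn_deriv hcd ha
  rw [← uIcc_of_le hcd] at hx hv
  have hu : ContinuousOn u (uIcc c d) := uIcc_of_le hcd ▸ h.continuousOn
  exact eq_mul_exp_integral_of_eq_add_integral (intervalIntegrable_phaseRate hω ha hu hv)
    (continuousOn_phasePoint hu hv)
    (fun y hy ↦ h.phasePoint_eq_add_integral hω.ne' ha (uIcc_of_le hcd ▸ hy)) x hx

end IsSolOn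

theorem phaseRate_im_of_phasePoint_eq (hω : ω ≠ 0) {x r φ : ℝ} (hr : r ≠ 0)
    (h : phasePoint ω u v x = r * Complex.exp (φ * Complex.I)) :
    (phaseRate ω a u v x).im = ω + (a x - ω ^ 2) / ω * sin φ ^ 2 := by
  have hu : u x = r * sin φ / ω := by
    rw [eq_div_iff hω, mul_comm, ← phasePoint_im (v := v), h, Complex.im_ofReal_mul,
      Complex.exp_ofReal_mul_I_im]
  have hquot : (u x : ℂ) / phasePoint ω u v x =
      (sin φ / ω : ℝ) * Complex.exp ((-φ : ℝ) * Complex.I) := by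
    have hr' : (r : ℂ) ≠ 0 := by exact_mod_cast hr
    have hω' : (ω : ℂ) ≠ 0 := by exact_mod_cast hω
    rw [h, hu, Complex.ofReal_neg, neg_mul, Complex.exp_neg]
    push_cast
    field_simp
  rw [phaseRate, hquot, Complex.sub_im, Complex.im_ofReal_mul, Complex.im_ofReal_mul,
    Complex.im_ofReal_mul, Complex.exp_ofReal_mul_I_im, Complex.I_im, sin_neg]
  ring

theorem IsSolOn.exists_isPruferAngle (h : IsSolOn a u v c d) (hcd : c ≤ d) (hω : 0 < ω)
    (ha : IntervalIntegrable a volume c d) (h0 : phasePoint ω u v c ≠ 0) :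
    ∃ θ : ℝ → ℝ, IsPruferAngle ω a θ c d ∧ ∀ x ∈ Icc c d, ∃ r : ℝ, 0 < r ∧
      phasePoint ω u v x = r * Complex.exp (θ x * Complex.I) := by
  have hIcc : uIcc c d = Icc c d := uIcc_of_le hcd
  have hκ : IntervalIntegrable (phaseRate ω a u v) volume c d :=
    intervalIntegrable_phaseRate hω ha (hIcc ▸ h.continuousOn) (hIcc ▸ h.continuousOn_deriv hcd ha)
  have hκim : IntervalIntegrable (fun t ↦ (phaseRate ω a u v t).im) volume c d :=
    ⟨hκ.1.im, hκ.2.im⟩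
  set z₀ := phasePoint ω u v c
  set θ : ℝ → ℝ := fun x ↦ z₀.arg + ∫ t in c..x, (phaseRate ω a u v t).im with hθ
  have hpolar : ∀ x ∈ Icc c d, ∃ r : ℝ, 0 < r ∧
      phasePoint ω u v x = r * Complex.exp (θ x * Complex.I) := by
    intro x hx
    have hκx := hκ.mono_set (uIcc_subset_uIcc left_mem_uIcc (hIcc ▸ hx))
    have him : (∫ t in c..x, phaseRate ω a u v t).im = ∫ t in c..x, (phaseRate ω a u v t).im :=
      (intervalIntegral.intervalIntegral_im hκx).symm
    refine ⟨‖z₀‖ * Real.exp (∫ t in c..x, phaseRate ω a u v t).re, by positivity, ?_⟩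
    rw [h.phasePoint_eq_mul_exp hω ha hx]
    nth_rw 1 [← Complex.re_add_im (∫ t in c..x, phaseRate ω a u v t)]
    nth_rw 1 [← Complex.norm_mul_exp_arg_mul_I (phasePoint ω u v c)]
    simp only [hθ, ← him, Complex.ofReal_add, Complex.ofReal_mul, Complex.ofReal_exp, add_mul,
      Complex.exp_add]
    ring
  have hθc : θ c = z₀.arg := by simp only [hθ, intervalIntegral.integral_same, add_zero]
  refine ⟨θ, ⟨?_, fun x hx ↦ ?_⟩, hpolar⟩
  · exact hIcc ▸ (absolutelyContinuousOnInterval_add_integral hκim z₀.arg).continuousOn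
  · rw [hθc]
    refine congrArg (z₀.arg + ·) (intervalIntegral.integral_congr fun t ht ↦ ?_)
    rw [uIcc_of_le hx.1] at ht
    obtain ⟨r, hr, hz⟩ := hpolar t ⟨ht.1, ht.2.trans hx.2⟩
    exact phaseRate_im_of_phasePoint_eq hω.ne' hr.ne' hz

theorem exists_eq_add_int_mul_pi_of_exp_eq {x y r s : ℝ} (hr : 0 < r) (hs : 0 < s) {k : ℕ}
    (h : r * Complex.exp (y * Complex.I) = (-1) ^ k * (s * Complex.exp (x * Complex.I))) :
    ∃ j : ℤ, y = x + (k + 2 * j : ℤ) * π := by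
  have hrs : r = s := by
    simpa [Complex.norm_exp_ofReal_mul_I, abs_of_pos hr, abs_of_pos hs] using congrArg norm h
  have hexp : Complex.exp (y * Complex.I) = Complex.exp (x * Complex.I + k * (π * Complex.I)) := by
    have hr' : (r : ℂ) ≠ 0 := by exact_mod_cast hr.ne'
    refine mul_left_cancel₀ hr' (h.trans ?_)
    rw [Complex.exp_add, Complex.exp_nat_mul, Complex.exp_pi_mul_I, hrs]
    ring
  obtain ⟨j, hj⟩ := Complex.exp_eq_exp_iff_exists_int.1 hexp
  refine ⟨j, ?_⟩
  have hy : (y : ℂ) = x + (k + 2 * j) * π := mul_right_cancel₀ Complex.I_ne_zero (by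
    rw [hj]; ring)
  exact_mod_cast hy

end PhasePlane

section Winding

variable {ω c d : ℝ} {a θ : ℝ → ℝ}

namespace IsPruferAngle

theorem intervalIntegrable_excess (h : IsPruferAngle ω a θ c d) (hcd : c ≤ d)
    (ha : IntervalIntegrable a volume c d) :
    IntervalIntegrable (fun t ↦ (a t - ω ^ 2) / ω * sin (θ t) ^ 2) volume c d :=
  ((ha.sub intervalIntegrable_const).div_const ω).mul_continuousOn
    (uIcc_of_le hcd ▸ (continuous_sin.comp_continuousOn h.continuousOn).pow 2)

theorem sub_eq_add_integral (h : IsPruferAngle ω a θ c d) (ha : IntervalIntegrable a volume c d)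
    {x y : ℝ} (hx : x ∈ Icc c d) (hy : y ∈ Icc c d) :
    θ y - θ x = ω * (y - x) + ∫ t in x..y, (a t - ω ^ 2) / ω * sin (θ t) ^ 2 := by
  have hcd : c ≤ d := hx.1.trans hx.2
  rw [← uIcc_of_le hcd] at hx hy
  have hexc := h.intervalIntegrable_excess hcd ha
  have hrate := (intervalIntegrable_const (c := ω)).add hexc
  rw [h.eq_add_integral x (uIcc_of_le hcd ▸ hx), h.eq_add_integral y (uIcc_of_le hcd ▸ hy),
    add_sub_add_left_eq_sub, intervalIntegral.integral_interval_sub_left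
      (hrate.mono_set (uIcc_subset_uIcc left_mem_uIcc hy))
      (hrate.mono_set (uIcc_subset_uIcc left_mem_uIcc hx)),
    intervalIntegral.integral_add intervalIntegrable_const
      (hexc.mono_set (uIcc_subset_uIcc hx hy)),
    intervalIntegral.integral_const, smul_eq_mul, mul_comm]

theorem strictMonoOn (h : IsPruferAngle ω a θ c d) (hω : 0 < ω)
    (ha : IntervalIntegrable a volume c d)
    (hle : ∀ᵐ t ∂volume.restrict (Icc c d), ω ^ 2 ≤ a t) : StrictMonoOn θ (Icc c d) := by
  intro x hx y hy hxy
  have hexc : 0 ≤ ∫ t in x..y, (a t - ω ^ 2) / ω * sin (θ t) ^ 2 := by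
    refine intervalIntegral.integral_nonneg_of_ae_restrict hxy.le ?_
    filter_upwards [ae_restrict_of_ae_restrict_of_subset (Icc_subset_Icc hx.1 hy.2) hle] with t ht
    exact mul_nonneg (div_nonneg (sub_nonneg.2 ht) hω.le) (sq_nonneg _)
  have hrot : 0 < ω * (y - x) := mul_pos hω (sub_pos.2 hxy)
  linarith [h.sub_eq_add_integral ha hx hy]

end IsPruferAngle

theorem countable_setOf_sin_eq_zero {s : Set ℝ} (hθ : InjOn θ s) :
    {x ∈ s | sin (θ x) = 0}.Countable :=
  MapsTo.countable_of_injOn (t := range fun n : ℤ ↦ (n * π : ℝ))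
    (fun _ hx ↦ sin_eq_zero_iff.1 hx.2) (hθ.mono (sep_subset _ _)) (countable_range _)

theorem IsPruferAngle.mul_lt_sub (h : IsPruferAngle ω a θ c d) (hcd : c < d) (hω : 0 < ω)
    (ha : IntervalIntegrable a volume c d)
    (hle : ∀ᵐ t ∂volume.restrict (Icc c d), ω ^ 2 ≤ a t)
    (hlt : 0 < volume {x ∈ Icc c d | ω ^ 2 < a x}) : ω * (d - c) < θ d - θ c := by
  have hnonneg : 0 ≤ᵐ[volume.restrict (uIoc c d)] fun t ↦ (a t - ω ^ 2) / ω * sin (θ t) ^ 2 := by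
    rw [uIoc_of_le hcd.le]
    filter_upwards [ae_restrict_of_ae_restrict_of_subset Ioc_subset_Icc_self hle] with t ht
    exact mul_nonneg (div_nonneg (sub_nonneg.2 ht) hω.le) (sq_nonneg _)
  have hexc : 0 < ∫ t in c..d, (a t - ω ^ 2) / ω * sin (θ t) ^ 2 := by
    rw [intervalIntegral.integral_pos_iff_support_of_nonneg_ae' hnonneg
      (h.intervalIntegrable_excess hcd.le ha)]
    have hnull : volume ({x ∈ Icc c d | sin (θ x) = 0} ∪ {c}) = 0 :=
      ((countable_setOf_sin_eq_zero (h.strictMonoOn hω ha hle).injOn).union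
        (countable_singleton c)).measure_zero _
    rw [← measure_sdiff_null hnull] at hlt
    refine ⟨hcd, hlt.trans_le (measure_mono ?_)⟩
    rintro x ⟨⟨hx, hax⟩, hx'⟩
    rw [mem_union, not_or] at hx'
    have hsin : sin (θ x) ≠ 0 := fun h0 ↦ hx'.1 ⟨hx, h0⟩
    exact ⟨mul_ne_zero (div_ne_zero (sub_pos.2 hax).ne' hω.ne') (pow_ne_zero 2 hsin),
      lt_of_le_of_ne hx.1 (Ne.symm hx'.2), hx.2⟩
  linarith [h.sub_eq_add_integral ha (left_mem_Icc.2 hcd.le) (right_mem_Icc.2 hcd.le)]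

end Winding

section Weight

/-- The weight `W(y) = 1 / max (sin² y) (sin² α)` against which the Prüfer equation is integrated:
`1 / sin² y` truncated at its value for `y = α`. -/
noncomputable def pruferWeight (α y : ℝ) : ℝ := (max (sin y ^ 2) (sin α ^ 2))⁻¹

variable {α c d : ℝ} {θ : ℝ → ℝ}

theorem pruferWeight_le (hα : sin α ≠ 0) (y : ℝ) : pruferWeight α y ≤ (sin α ^ 2)⁻¹ :=
  inv_anti₀ (by positivity) (le_max_right _ _)

theorem pruferWeight_nonneg (α y : ℝ) : 0 ≤ pruferWeight α y :=
  inv_nonneg.2 ((sq_nonneg _).trans (le_max_left _ _))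

theorem pruferWeight_mul_sq_sin_le_one (α y : ℝ) : pruferWeight α y * sin y ^ 2 ≤ 1 :=
  inv_mul_le_one_of_le₀ (le_max_left _ _) ((sq_nonneg _).trans (le_max_left _ _))

theorem continuous_pruferWeight (hα : sin α ≠ 0) : Continuous (pruferWeight α) := by
  refine Continuous.inv₀ (by fun_prop) fun y ↦ ?_
  exact (lt_max_of_lt_right (by positivity)).ne'

theorem pruferWeight_periodic (α : ℝ) : Function.Periodic (pruferWeight α) π := fun y ↦ by
  simp only [pruferWeight, sin_add_pi, neg_sq]

theorem pruferWeight_pi_sub (α y : ℝ) : pruferWeight α (π - y) = pruferWeight α y := by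
  rw [pruferWeight, sin_pi_sub, pruferWeight]

theorem integral_inv_sq_sin (h : ∀ y ∈ uIcc c d, sin y ≠ 0) :
    ∫ y in c..d, (sin y ^ 2)⁻¹ = cot c - cot d := by
  have hderiv : ∀ y ∈ uIcc c d, HasDerivAt (fun y ↦ -(cos y / sin y)) (sin y ^ 2)⁻¹ y := by
    intro y hy
    have hy0 := h y hy
    refine ((hasDerivAt_cos y).div (hasDerivAt_sin y) hy0).neg.congr_deriv ?_
    field_simp
    linear_combination sin_sq_add_cos_sq y
  rw [intervalIntegral.integral_eq_sub_of_hasDerivAt hderiv, cot_eq_cos_div_sin, cot_eq_cos_div_sin]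
  · ring
  · exact ContinuousOn.intervalIntegrable
      (ContinuousOn.inv₀ (by fun_prop) fun y hy ↦ pow_ne_zero 2 (h y hy))

theorem sq_sin_le_sq_sin {x y : ℝ} (hx : 0 ≤ x) (hxy : x ≤ y) (hy : y ≤ π / 2) :
    sin x ^ 2 ≤ sin y ^ 2 :=
  pow_le_pow_left₀ (sin_nonneg_of_nonneg_of_le_pi hx (by linarith [pi_pos]))
    (sin_le_sin_of_le_of_le_pi_div_two (by linarith [pi_pos]) hy hxy) 2

theorem integral_pruferWeight_pi_div_two (hα : α ∈ Ioo 0 (π / 2)) :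
    ∫ y in 0..π / 2, pruferWeight α y = α * (sin α ^ 2)⁻¹ + cot α := by
  have hsin : ∀ y ∈ Icc α (π / 2), sin y ≠ 0 := fun y hy ↦
    (sin_pos_of_pos_of_lt_pi (hα.1.trans_le hy.1) (by linarith [hy.2, pi_pos])).ne'
  have hint : ∀ x y, IntervalIntegrable (pruferWeight α) volume x y :=
    (continuous_pruferWeight (hsin α (left_mem_Icc.2 hα.2.le))).intervalIntegrable
  have hflat : ∫ y in 0..α, pruferWeight α y = ∫ _ in 0..α, (sin α ^ 2)⁻¹ := by
    refine intervalIntegral.integral_congr fun y hy ↦ ?_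
    rw [uIcc_of_le hα.1.le] at hy
    simp only [pruferWeight, max_eq_right (sq_sin_le_sq_sin hy.1 hy.2 hα.2.le)]
  have hsteep : ∫ y in α..π / 2, pruferWeight α y = ∫ y in α..π / 2, (sin y ^ 2)⁻¹ := by
    refine intervalIntegral.integral_congr fun y hy ↦ ?_
    rw [uIcc_of_le hα.2.le] at hy
    simp only [pruferWeight, max_eq_left (sq_sin_le_sq_sin hα.1.le hy.1 hy.2)]
  rw [← intervalIntegral.integral_add_adjacent_intervals (hint 0 α) (hint α _), hflat, hsteep,
    integral_inv_sq_sin (by rwa [uIcc_of_le hα.2.le]), intervalIntegral.integral_const, sub_zero,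
    smul_eq_mul, cot_eq_cos_div_sin (π / 2), cos_pi_div_two, zero_div, sub_zero]

theorem integral_pruferWeight_pi (hα : α ∈ Ioo 0 (π / 2)) :
    ∫ y in 0..π, pruferWeight α y = 2 * (α * (sin α ^ 2)⁻¹ + cot α) := by
  have hsin : sin α ≠ 0 :=
    (sin_pos_of_pos_of_lt_pi hα.1 (by linarith [hα.2, pi_pos])).ne'
  have hint : ∀ x y, IntervalIntegrable (pruferWeight α) volume x y :=
    (continuous_pruferWeight hsin).intervalIntegrable
  have hsymm : ∫ y in π / 2..π, pruferWeight α y = ∫ y in 0..π / 2, pruferWeight α y := by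
    have hreflect := intervalIntegral.integral_comp_sub_left (a := 0) (b := π / 2)
      (pruferWeight α) π
    rw [sub_zero, sub_half] at hreflect
    simp only [← hreflect, pruferWeight_pi_sub]
  rw [← intervalIntegral.integral_add_adjacent_intervals (hint 0 (π / 2)) (hint _ π), hsymm,
    integral_pruferWeight_pi_div_two hα, two_mul]

theorem integral_pruferWeight_add_int_mul_pi (hα : sin α ≠ 0) (x : ℝ) (m : ℤ) :
    ∫ y in x..x + m * π, pruferWeight α y = m * ∫ y in 0..π, pruferWeight α y := by
  have hper := pruferWeight_periodic α
  have hturns := hper.intervalIntegral_add_zsmul_eq m x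
    (continuous_pruferWeight hα).intervalIntegrable
  rwa [zsmul_eq_mul, hper.intervalIntegral_add_eq x 0, zero_add, zsmul_eq_mul] at hturns

theorem exists_sq_sin_eq_one {x y : ℝ} (h : x + π ≤ y) : ∃ z ∈ Icc x y, sin z ^ 2 = 1 := by
  obtain ⟨m, hm, -⟩ := existsUnique_add_zsmul_mem_Ico pi_pos (π / 2) x
  rw [zsmul_eq_mul] at hm
  refine ⟨π / 2 + m * π, ⟨hm.1, hm.2.le.trans h⟩, ?_⟩
  rw [sin_sq, add_comm, cos_add_pi_div_two, sin_int_mul_pi]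
  norm_num

theorem integral_pruferWeight_comp_lt (hα : α ∈ Ioo 0 (π / 2)) (hcd : c < d)
    (hθ : ContinuousOn θ (Icc c d)) (hπ : θ c + π ≤ θ d) :
    ∫ t in c..d, pruferWeight α (θ t) < (d - c) * (sin α ^ 2)⁻¹ := by
  have hsin : 0 < sin α := sin_pos_of_pos_of_lt_pi hα.1 (by linarith [hα.2, pi_pos])
  have hsin_lt : sin α ^ 2 < 1 := by
    have hcos : 0 < cos α := cos_pos_of_mem_Ioo ⟨by linarith [hα.1, pi_pos], hα.2⟩
    linarith [sin_sq_add_cos_sq α, pow_pos hcos 2]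
  obtain ⟨z, hz, hz1⟩ := exists_sq_sin_eq_one hπ
  obtain ⟨x, hx, rfl⟩ := intermediate_value_Icc hcd.le hθ hz
  rw [← smul_eq_mul, ← intervalIntegral.integral_const]
  refine intervalIntegral.integral_lt_integral_of_continuousOn_of_le_of_exists_lt hcd
    ((continuous_pruferWeight hsin.ne').comp_continuousOn hθ) continuousOn_const
    (fun t _ ↦ pruferWeight_le hsin.ne' _) ⟨x, hx, ?_⟩
  simp only [pruferWeight, hz1]
  exact inv_strictAnti₀ (by positivity) (by rwa [max_eq_left hsin_lt.le])

end Weight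

section Lyapunov

variable {ω c d : ℝ} {a θ : ℝ → ℝ}

theorem pruferWeight_mul_rate_le {α A φ : ℝ} (hω : 0 < ω) (hA : ω ^ 2 ≤ A) :
    pruferWeight α φ * (ω + (A - ω ^ 2) / ω * sin φ ^ 2) ≤
      ω * pruferWeight α φ + (A - ω ^ 2) / ω := by
  have hexc : 0 ≤ (A - ω ^ 2) / ω := div_nonneg (sub_nonneg.2 hA) hω.le
  linarith [mul_le_mul_of_nonneg_left (pruferWeight_mul_sq_sin_le_one α φ) hexc]

namespace IsPruferAngle

theorem integral_pruferWeight_le (h : IsPruferAngle ω a θ c d) (hcd : c ≤ d) (hω : 0 < ω)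
    (ha : IntervalIntegrable a volume c d)
    (hle : ∀ᵐ t ∂volume.restrict (Icc c d), ω ^ 2 ≤ a t) {α : ℝ} (hα : sin α ≠ 0) :
    ∫ y in θ c..θ d, pruferWeight α y ≤
      (ω * ∫ t in c..d, pruferWeight α (θ t)) + ((∫ t in c..d, a t) - ω ^ 2 * (d - c)) / ω := by
  have hIcc : uIcc c d = Icc c d := uIcc_of_le hcd
  have hrate : IntervalIntegrable (fun t ↦ ω + (a t - ω ^ 2) / ω * sin (θ t) ^ 2) volume c d :=
    intervalIntegrable_const.add (h.intervalIntegrable_excess hcd ha)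
  have hW : ContinuousOn (fun t ↦ pruferWeight α (θ t)) (uIcc c d) :=
    (continuous_pruferWeight hα).comp_continuousOn (hIcc ▸ h.continuousOn)
  have hωW := (hW.intervalIntegrable (μ := volume)).const_mul ω
  have hexc : IntervalIntegrable (fun t ↦ (a t - ω ^ 2) / ω) volume c d :=
    (ha.sub intervalIntegrable_const).div_const ω
  calc ∫ y in θ c..θ d, pruferWeight α y
      = ∫ t in c..d, pruferWeight α (θ t) * (ω + (a t - ω ^ 2) / ω * sin (θ t) ^ 2) :=
        (integral_comp_mul_of_eq_add_integral hrate (hIcc ▸ h.eq_add_integral)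
          (continuous_pruferWeight hα)).symm
    _ ≤ ∫ t in c..d, (ω * pruferWeight α (θ t) + (a t - ω ^ 2) / ω) := by
        refine intervalIntegral.integral_mono_ae_restrict hcd (hrate.continuousOn_mul hW)
          (hωW.add hexc) ?_
        filter_upwards [hle] with t ht using pruferWeight_mul_rate_le hω ht
    _ = _ := by
        rw [intervalIntegral.integral_add hωW hexc, intervalIntegral.integral_const_mul,
          intervalIntegral.integral_div, intervalIntegral.integral_sub ha intervalIntegrable_const,
          intervalIntegral.integral_const, smul_eq_mul, mul_comm (d - c)]

theorem add_cot_lt_integral (h : IsPruferAngle ω a θ c d) (hcd : c < d) (hω : 0 < ω)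
    (ha : IntervalIntegrable a volume c d)
    (hle : ∀ᵐ t ∂volume.restrict (Icc c d), ω ^ 2 ≤ a t) {m : ℤ} (hm : θ d = θ c + m * π)
    {ν : ℝ} (hνm : ν ≤ m) (hν : ω * (d - c) < ν * π) :
    ω ^ 2 * (d - c) + 2 * ω * ν * cot (ω * (d - c) / (2 * ν)) < ∫ t in c..d, a t := by
  have hangle : 0 < ω * (d - c) := mul_pos hω (sub_pos.2 hcd)
  have hν0 : 0 < ν := (mul_pos_iff_of_pos_right pi_pos).1 (hangle.trans hν)
  have hm1 : (1 : ℝ) ≤ m := by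
    have : 0 < m := by exact_mod_cast hν0.trans_le hνm
    exact_mod_cast this
  set α := ω * (d - c) / (2 * ν) with hαdef
  have hα : α ∈ Ioo 0 (π / 2) := ⟨by positivity, by
    rw [hαdef, div_lt_iff₀ (by positivity)]; linarith⟩
  have hsin : sin α ≠ 0 := (sin_pos_of_pos_of_lt_pi hα.1 (by linarith [hα.2, pi_pos])).ne'
  have hcancel : 2 * ν * α = ω * (d - c) := by rw [hαdef]; field_simp
  have hturns : ν * (2 * (α * (sin α ^ 2)⁻¹ + cot α)) ≤ ∫ y in θ c..θ d, pruferWeight α y := by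
    rw [hm, integral_pruferWeight_add_int_mul_pi hsin, ← integral_pruferWeight_pi hα]
    exact mul_le_mul_of_nonneg_right hνm
      (intervalIntegral.integral_nonneg pi_pos.le fun y _ ↦ pruferWeight_nonneg α y)
  have hW : ω * ∫ t in c..d, pruferWeight α (θ t) < ω * ((d - c) * (sin α ^ 2)⁻¹) :=
    mul_lt_mul_of_pos_left (integral_pruferWeight_comp_lt hα hcd h.continuousOn
      (by rw [hm]; nlinarith [pi_pos])) hω
  have hexc : 2 * ν * cot α < ((∫ t in c..d, a t) - ω ^ 2 * (d - c)) / ω := by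
    linear_combination hturns + h.integral_pruferWeight_le hcd.le hω ha hle hsin + hW -
      (sin α ^ 2)⁻¹ * hcancel
  rw [lt_div_iff₀ hω] at hexc
  linarith

end IsPruferAngle

theorem stmt6_general {T : ℝ} (hT : 0 < T) {k : ℕ} (hk : 1 ≤ k) {a u v : ℝ → ℝ}
    (ha : IntegrableOn a (Icc 0 T)) (hprec : Prec T (fun _ ↦ (k * π / T) ^ 2) a)
    (hint : ∫ x in 0..T, a x ≤
      T * (k * π / T) ^ 2 + 2 * (k * π / T) * (k + 2) * cot (k * π / (2 * (k + 2))))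
    (hsol : IsSolOn a u v 0 T) (hu : u T = (-1) ^ k * u 0) (hv : v T = (-1) ^ k * v 0) :
    ∀ x ∈ Icc 0 T, u x = 0 := by
  have hω : 0 < k * π / T := by positivity
  have hωT : k * π / T * (T - 0) = k * π := by rw [sub_zero, div_mul_cancel₀ _ hT.ne']
  replace ha : IntervalIntegrable a volume 0 T := (intervalIntegrable_iff' ..).2 <| by
    rwa [uIcc_of_le hT.le]
  by_cases h0 : phasePoint (k * π / T) u v 0 = 0
  · intro x hx
    refine eq_zero_of_phasePoint_eq_zero hω.ne' (v := v) ?_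
    rw [hsol.phasePoint_eq_mul_exp hω ha hx, h0, zero_mul]
  · obtain ⟨θ, hθ, hpolar⟩ := hsol.exists_isPruferAngle hT.le hω ha h0
    obtain ⟨r, hr, hzT⟩ := hpolar T (right_mem_Icc.2 hT.le)
    obtain ⟨s, hs, hz0⟩ := hpolar 0 (left_mem_Icc.2 hT.le)
    have hbdry : phasePoint (k * π / T) u v T = (-1) ^ k * phasePoint (k * π / T) u v 0 := by
      simp only [phasePoint, hu, hv]
      push_cast
      ring
    rw [hzT, hz0] at hbdry
    obtain ⟨j, hj⟩ := exists_eq_add_int_mul_pi_of_exp_eq hr hs hbdry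
    have hwind := hθ.mul_lt_sub hT hω ha hprec.1 hprec.2
    rw [hωT, hj, add_sub_cancel_left, mul_lt_mul_iff_left₀ pi_pos] at hwind
    have hkm : (k : ℤ) < k + 2 * j := by exact_mod_cast hwind
    have hturns : (k + 2 : ℝ) ≤ (k + 2 * j : ℤ) := by
      exact_mod_cast show (k : ℤ) + 2 ≤ k + 2 * j by omega
    have hlt := hθ.add_cot_lt_integral hT hω ha hprec.1 hj hturns (by rw [hωT]; nlinarith [pi_pos])
    rw [hωT, sub_zero] at hlt
    linarith

theorem lam_eq_sq (T : ℝ) (n : ℕ) : lam T n = ((2 * n : ℕ) * π / T) ^ 2 := by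
  rw [lam]
  push_cast
  ring

theorem beta1_eq (T : ℝ) (n : ℕ) :
    beta1 T n = 2 * ((2 * n : ℕ) * π / T) * ((2 * n : ℕ) + 2) *
      cot ((2 * n : ℕ) * π / (2 * ((2 * n : ℕ) + 2))) := by
  have harg : (n * π / (2 * (n + 1)) : ℝ) = (2 * n : ℕ) * π / (2 * ((2 * n : ℕ) + 2)) := by
    push_cast
    field_simp
  rw [beta1, harg]
  push_cast
  ring

end Lyapunov

theorem stmt6 (T : ℝ) (hT : 0 < T) (n : ℕ) (hn : 1 ≤ n)
    (a : ℝ → ℝ) (hLT : MemLT T a)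
    (hprec : Prec T (fun _ => lam T n) a)
    (hnorm : (∫ x in (0:ℝ)..T, |a x|) ≤ T * lam T n + beta1 T n) :
    ∀ u v : ℝ → ℝ, PeriodicSol T a u v → ∀ x ∈ Set.Icc 0 T, u x = 0 := by
  intro u v h
  have hint : ∫ x in 0..T, a x ≤ T * lam T n + beta1 T n :=
    ((le_abs_self _).trans (intervalIntegral.abs_integral_le_integral_abs hT.le)).trans hnorm
  rw [lam_eq_sq, beta1_eq] at hint
  exact stmt6_general hT (show 1 ≤ 2 * n by omega) hLT.2.2 (by simpa only [lam_eq_sq] using hprec)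
    hint h.1 (by simp [h.2.1]) (by simp [h.2.2])
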